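/- arXiv:1707.06157 — 2 statements merged into one kernel-verified Lean document; each statement's English description precedes it below -/
import Mathlib

section
/- Let σ > 0 and let d1max, d2max > 0. Define f(d1, d2) = 1 − (1 − Q(d1/(2σ)))·(1 − Q(d2/(2σ))). Then f is strictly decreasing in each argument on (0,∞) × (0,∞), and consequently for all (d1, d2) with 0 < d1 ≤ d1max and 0 < d2 ≤ d2max one has f(d1max, d2max) ≤ f(d1, d2), with equality if and only if (d1, d2) = (d1max, d2max). -/
/-- The Gaussian tail function `Q(x) = ∫_x^∞ (1/√(2π)) e^{−t²/2} dt`. -/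
noncomputable def gaussQ (x : ℝ) : ℝ :=
  ∫ t in Set.Ioi x, (1 / Real.sqrt (2 * Real.pi)) * Real.exp (-t ^ 2 / 2)

/-!
`Q` is the upper tail of the standard Gaussian law, a probability measure charging every nonempty
open set; hence `Q` is strictly decreasing and never reaches `1`.
So `1 - Q` is a *positive* strictly increasing function, and the product
`(1 - Q(d₁/2σ)) (1 - Q(d₂/2σ))` is strictly increasing in each variable, even for negative `dᵢ`.
Together the two variables give strict monotonicity for the product order, which yields both the
minimum and its uniqueness.
-/

open MeasureTheory ProbabilityTheory Set

section UpperTail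

variable {X : Type*} [TopologicalSpace X] [LinearOrder X] [OrderTopology X] [DenselyOrdered X]
  [MeasurableSpace X] [OpensMeasurableSpace X] (μ : Measure X) [μ.IsOpenPosMeasure]

theorem strictAnti_measureReal_Ioi [IsFiniteMeasure μ] : StrictAnti fun x => μ.real (Ioi x) := by
  intro x y hxy
  have hIoo : 0 < μ.real (Ioo x y) :=
    ENNReal.toReal_pos ((Measure.measure_Ioo_pos μ).mpr hxy).ne' (measure_ne_top μ _)
  have hdisj : Disjoint (Ioo x y) (Ioi y) :=
    disjoint_left.mpr fun _ hxz hyz => hxz.2.not_gt hyz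
  calc
    μ.real (Ioi y) < μ.real (Ioo x y) + μ.real (Ioi y) := lt_add_of_pos_left _ hIoo
    _ = μ.real (Ioo x y ∪ Ioi y) := (measureReal_union hdisj measurableSet_Ioi).symm
    _ ≤ μ.real (Ioi x) :=
      measureReal_mono (union_subset Ioo_subset_Ioi_self (Ioi_subset_Ioi hxy.le))

theorem measureReal_Ioi_lt_one [NoMinOrder X] [IsProbabilityMeasure μ] (x : X) :
    μ.real (Ioi x) < 1 :=
  let ⟨_, hyx⟩ := exists_lt x
  (strictAnti_measureReal_Ioi μ hyx).trans_le measureReal_le_one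

end UpperTail

theorem isOpenPosMeasure_gaussianReal (m : ℝ) {v : NNReal} (hv : v ≠ 0) :
    (gaussianReal m v).IsOpenPosMeasure :=
  (gaussianReal_absolutelyContinuous' m hv).isOpenPosMeasure

theorem gaussQ_eq_measureReal_Ioi (x : ℝ) : gaussQ x = (gaussianReal 0 1).real (Ioi x) := by
  have hdensity (t : ℝ) :
      1 / √(2 * Real.pi) * Real.exp (-t ^ 2 / 2) = gaussianPDFReal 0 1 t := by
    simp [gaussianPDFReal]
  have hnonneg : 0 ≤ ∫ t in Ioi x, gaussianPDFReal 0 1 t :=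
    integral_nonneg (gaussianPDFReal_nonneg 0 1)
  simp only [gaussQ, hdensity, measureReal_def, gaussianReal_apply_eq_integral 0 one_ne_zero,
    ENNReal.toReal_ofReal hnonneg]

theorem strictAnti_gaussQ : StrictAnti gaussQ := by
  have := isOpenPosMeasure_gaussianReal 0 one_ne_zero
  simpa only [← gaussQ_eq_measureReal_Ioi] using strictAnti_measureReal_Ioi (gaussianReal 0 1)

theorem gaussQ_lt_one (x : ℝ) : gaussQ x < 1 := by
  have := isOpenPosMeasure_gaussianReal 0 one_ne_zero
  simpa only [gaussQ_eq_measureReal_Ioi] using measureReal_Ioi_lt_one (gaussianReal 0 1) x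

section ProductOrder

variable {α β γ : Type*} [PartialOrder α]

theorem strictAnti_uncurry [PartialOrder β] [Preorder γ] {f : α → β → γ}
    (hleft : ∀ b, StrictAnti fun a => f a b) (hright : ∀ a, StrictAnti (f a)) :
    StrictAnti (Function.uncurry f) := by
  rintro ⟨a, b⟩ ⟨a', b'⟩ hlt
  obtain ⟨ha, hb⟩ | ⟨ha, hb⟩ := Prod.lt_iff.mp hlt
  · exact ((hright a').antitone hb).trans_lt (hleft b ha)
  · exact (hright a' hb).trans_le ((hleft b).antitone ha)

theorem eq_iff_eq_of_strictAnti_of_le [Preorder γ] {f : α → γ} (hf : StrictAnti f) {a b : α}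
    (hab : a ≤ b) : f b = f a ↔ a = b :=
  ⟨fun h => hab.eq_of_not_lt fun hlt => (hf hlt).ne h, fun h => h ▸ rfl⟩

end ProductOrder

/-- The asymptotic joint MAP error rate `f(d₁, d₂)` of the two-sender GMAC with orthogonal basic
pulses, noise level `σ` and constellation separations `d₁`, `d₂`: the senders err independently,
sender `i` with probability `Q(dᵢ/2σ)`. The separations range over all of `ℝ`, although only
positive ones are physical. -/
noncomputable def jointErrorRate (σ d1 d2 : ℝ) : ℝ :=
  1 - (1 - gaussQ (d1 / (2 * σ))) * (1 - gaussQ (d2 / (2 * σ)))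

theorem jointErrorRate_comm (σ d1 d2 : ℝ) : jointErrorRate σ d1 d2 = jointErrorRate σ d2 d1 := by
  simp only [jointErrorRate, mul_comm]

theorem strictAnti_jointErrorRate_left {σ : ℝ} (hσ : 0 < σ) (d2 : ℝ) :
    StrictAnti fun d1 => jointErrorRate σ d1 d2 := by
  intro a b hab
  have hQ : gaussQ (b / (2 * σ)) < gaussQ (a / (2 * σ)) := strictAnti_gaussQ (by gcongr)
  have hpos : 0 < 1 - gaussQ (d2 / (2 * σ)) := sub_pos.mpr (gaussQ_lt_one _)
  simp only [jointErrorRate]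
  gcongr

theorem strictAnti_jointErrorRate_right {σ : ℝ} (hσ : 0 < σ) (d1 : ℝ) :
    StrictAnti (jointErrorRate σ d1) := by
  simpa only [jointErrorRate_comm σ _ d1] using strictAnti_jointErrorRate_left hσ d1

theorem strictAnti_jointErrorRate {σ : ℝ} (hσ : 0 < σ) :
    StrictAnti (Function.uncurry (jointErrorRate σ)) :=
  strictAnti_uncurry (strictAnti_jointErrorRate_left hσ) (strictAnti_jointErrorRate_right hσ)

theorem stmt_8_general {σ : ℝ} (hσ : 0 < σ) :
    (∀ d2, StrictAnti fun d1 => jointErrorRate σ d1 d2) ∧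
    (∀ d1, StrictAnti fun d2 => jointErrorRate σ d1 d2) ∧
    ∀ {d1 d2 d1max d2max : ℝ}, d1 ≤ d1max → d2 ≤ d2max →
      jointErrorRate σ d1max d2max ≤ jointErrorRate σ d1 d2 ∧
        (jointErrorRate σ d1max d2max = jointErrorRate σ d1 d2 ↔ d1 = d1max ∧ d2 = d2max) := by
  refine ⟨strictAnti_jointErrorRate_left hσ, strictAnti_jointErrorRate_right hσ, ?_⟩
  intro d1 d2 d1max d2max h1 h2
  have hle : (d1, d2) ≤ (d1max, d2max) := ⟨h1, h2⟩
  have hanti := strictAnti_jointErrorRate hσ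
  exact ⟨hanti.antitone hle, (eq_iff_eq_of_strictAnti_of_le hanti hle).trans Prod.mk_inj⟩

/-- The asymptotic orthogonal-waveform error rate `f(d1,d2) = 1 − (1−Q(d1/2σ))(1−Q(d2/2σ))`
is strictly decreasing in each argument on `(0,∞)`, hence is uniquely minimized over
`(0, d1max] × (0, d2max]` at `(d1max, d2max)`. -/
theorem stmt_8 (σ : ℝ) (hσ : 0 < σ) (d1max d2max : ℝ) (h1 : 0 < d1max) (h2 : 0 < d2max) :
    (∀ d2 ∈ Set.Ioi (0 : ℝ),
      StrictAntiOn (fun d1 : ℝ =>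
        1 - (1 - gaussQ (d1 / (2 * σ))) * (1 - gaussQ (d2 / (2 * σ)))) (Set.Ioi 0)) ∧
    (∀ d1 ∈ Set.Ioi (0 : ℝ),
      StrictAntiOn (fun d2 : ℝ =>
        1 - (1 - gaussQ (d1 / (2 * σ))) * (1 - gaussQ (d2 / (2 * σ)))) (Set.Ioi 0)) ∧
    (∀ d1 d2 : ℝ, 0 < d1 → d1 ≤ d1max → 0 < d2 → d2 ≤ d2max →
      ((1 - (1 - gaussQ (d1max / (2 * σ))) * (1 - gaussQ (d2max / (2 * σ))))
          ≤ 1 - (1 - gaussQ (d1 / (2 * σ))) * (1 - gaussQ (d2 / (2 * σ))) ∧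
        ((1 - (1 - gaussQ (d1max / (2 * σ))) * (1 - gaussQ (d2max / (2 * σ))))
            = 1 - (1 - gaussQ (d1 / (2 * σ))) * (1 - gaussQ (d2 / (2 * σ))) ↔
          d1 = d1max ∧ d2 = d2max))) := by
  obtain ⟨hleft, hright, hmin⟩ := stmt_8_general hσ
  exact ⟨fun d2 _ => (hleft d2).strictAntiOn _, fun d1 _ => (hright d1).strictAntiOn _,
    fun _ _ _ hd1 _ hd2 => hmin hd1 hd2⟩
end

section
/- Let σ > 0, 0 < p < 1, and 0 < d2max ≤ d1max. Then the function f(d2) = 1 − Q(d2/(2σ)) − p·Q((d1max − d2)/(2σ)) is concave on the interval [0, d2max]. -/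
/-!
The standard Gaussian density decreases on `[0, ∞)`, so its tail integral `Q` is convex there: the
slope of a tail integral over an interval is minus the average of the integrand over it. On
`[0, d1max]` both arguments of `Q` in `f` are nonnegative affine functions of `d2`, and `f` is a
constant minus a nonnegative combination of the resulting convex functions.
-/

open Set MeasureTheory ProbabilityTheory
open scoped NNReal

/- Adjacent slopes compare through `-f y` at the common endpoint `y`, so `f` need not be
continuous. -/
lemma convexOn_integral_Ioi_of_antitoneOn {f : ℝ → ℝ} {s : Set ℝ} (hs : Convex ℝ s)
    (hf : AntitoneOn f s) (hfi : ∀ x ∈ s, IntegrableOn f (Ioi x)) :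
    ConvexOn ℝ s (fun x => ∫ t in Ioi x, f t) := by
  refine convexOn_of_slope_mono_adjacent hs fun {x y z} hx hz hxy hyz => ?_
  have hy : y ∈ s := hs.ordConnected.out hx hz ⟨hxy.le, hyz.le⟩
  have hint {a b : ℝ} (ha : a ∈ s) (hab : a ≤ b) : IntervalIntegrable f volume a b :=
    (intervalIntegrable_iff_integrableOn_Ioc_of_le hab).2 ((hfi a ha).mono_set Ioc_subset_Ioi_self)
  have hleft : (y - x) * f y ≤ ∫ t in x..y, f t := by
    simpa using intervalIntegral.integral_mono_on hxy.le intervalIntegrable_const (hint hx hxy.le)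
      fun t ht => hf (hs.ordConnected.out hx hy ht) hy ht.2
  have hright : ∫ t in y..z, f t ≤ (z - y) * f y := by
    simpa using intervalIntegral.integral_mono_on hyz.le (hint hy hyz.le) intervalIntegrable_const
      fun t ht => hf hy (hs.ordConnected.out hy hz ht) ht.1
  rw [← intervalIntegral.integral_Ioi_sub_Ioi (hfi x hx) hxy.le] at hleft
  rw [← intervalIntegral.integral_Ioi_sub_Ioi (hfi y hy) hyz.le] at hright
  trans -f y
  · rw [div_le_iff₀ (sub_pos.2 hxy)]
    linarith
  · rw [le_div_iff₀ (sub_pos.2 hyz)]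
    linarith

lemma antitoneOn_gaussianPDFReal (μ : ℝ) (v : ℝ≥0) :
    AntitoneOn (gaussianPDFReal μ v) (Ici μ) := by
  intro x hx y _ hxy
  have hx' : 0 ≤ x - μ := sub_nonneg.2 hx
  unfold gaussianPDFReal
  gcongr

lemma gaussQ_eq_integral_gaussianPDFReal (x : ℝ) :
    gaussQ x = ∫ t in Ioi x, gaussianPDFReal 0 1 t := by
  simp [gaussQ, gaussianPDFReal]

lemma convexOn_gaussQ : ConvexOn ℝ (Ici 0) gaussQ := by
  rw [funext gaussQ_eq_integral_gaussianPDFReal]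
  exact convexOn_integral_Ioi_of_antitoneOn (convex_Ici 0) (antitoneOn_gaussianPDFReal 0 1)
    fun _ _ => (integrable_gaussianPDFReal 0 1).integrableOn

lemma convexOn_gaussQ_div {c : ℝ} (hc : 0 < c) :
    ConvexOn ℝ (Ici 0) (fun x => gaussQ (x / c)) :=
  (convexOn_gaussQ.comp_linearMap (LinearMap.mulRight ℝ c⁻¹)).subset
    (fun _ hx => mul_nonneg hx (inv_pos.2 hc).le) (convex_Ici 0)

lemma convexOn_gaussQ_sub_div (d : ℝ) {c : ℝ} (hc : 0 < c) :
    ConvexOn ℝ (Iic d) (fun x => gaussQ ((d - x) / c)) :=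
  ((convexOn_gaussQ_div hc).comp_affineMap (AffineEquiv.constVSub ℝ d).toAffineMap).subset
    (fun _ hx => by simpa using hx) (convex_Iic d)

theorem stmt_12_general (σ p d1max : ℝ) (hσ : 0 < σ) (hp : 0 ≤ p) :
    ConcaveOn ℝ (Set.Icc 0 d1max)
      (fun d2 : ℝ =>
        1 - gaussQ (d2 / (2 * σ)) - p * gaussQ ((d1max - d2) / (2 * σ))) := by
  have hc : 0 < 2 * σ := by positivity
  have hconv : Convex ℝ (Icc 0 d1max) := convex_Icc 0 d1max
  have hQ₂ := (convexOn_gaussQ_div hc).subset Icc_subset_Ici_self hconv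
  have hpQ₁ := ((convexOn_gaussQ_sub_div d1max hc).subset Icc_subset_Iic_self hconv).smul hp
  exact ((concaveOn_const 1 hconv).sub hQ₂).sub hpQ₁

/-- With sender 1's separation fixed at `d1max`, the Case I correct-decoding probability
`f(d2) = 1 − Q(d2/(2σ)) − p·Q((d1max − d2)/(2σ))` is concave on `[0, d2max]`
when `d2max ≤ d1max`. -/
theorem stmt_12 (σ p d1max d2max : ℝ) (hσ : 0 < σ) (hp : 0 < p) (hp1 : p < 1)
    (h2 : 0 < d2max) (h12 : d2max ≤ d1max) :
    ConcaveOn ℝ (Set.Icc 0 d2max)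
      (fun d2 : ℝ =>
        1 - gaussQ (d2 / (2 * σ)) - p * gaussQ ((d1max - d2) / (2 * σ))) :=
  (stmt_12_general σ p d1max hσ hp.le).subset (Icc_subset_Icc_right h12) (convex_Icc 0 d2max)
end
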